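/- Let A = (a_{pq}) be a generic Hermitian n×n matrix over the quaternions ℍ. Then for all indices p, q, conj(Q_{pq}(A)) = Q_{qp}(A), where Q_{pq}(A) = |A|_{pq} ν(A^{pq}) and conj denotes quaternionic conjugation. -/

import Mathlib

/-!
Both factors of `Q_{pq}` behave well under the Hermitian conjugate. Over any star ring, inverting a
matrix commutes with `ᴴ`, so `|Aᴴ|_{ji}` is the conjugate of `|A|_{ij}` (`qdet_conjTranspose`).
Applied to the trailing principal submatrices of `C`, this gives that `y_k(Cᴴ)` is the conjugate of
`y_k(C)`, and conjugate quaternions have the same norm, so `ν(Cᴴ) = ν(C)` (`nuMat_conjTranspose`).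
For `A` Hermitian, `A^{qp}` is the Hermitian conjugate of `A^{pq}`, and the claim follows because
the real number `ν(A^{pq})` is central and fixed by conjugation.
-/

open Matrix

variable {R : Type*} [Ring R]

/-- The submatrix of `A` obtained by deleting row `i` and column `j`,
with rows and columns retaining their original labels. -/
def delSub {I J : Type*} (A : Matrix I J R) (i : I) (j : J) :
    Matrix {p : I // p ≠ i} {q : J // q ≠ j} R :=
  A.submatrix Subtype.val Subtype.val

/-- A (possibly rectangular-typed) matrix is invertible if it has a two-sided inverse. -/
def HasTwoSidedInv {I J : Type*} [Fintype I] [Fintype J] [DecidableEq I] [DecidableEq J]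
    (M : Matrix I J R) : Prop :=
  ∃ B : Matrix J I R, M * B = 1 ∧ B * M = 1

/-- The quasideterminant `|A|_{ij}` is defined iff `A^{ij}` is invertible. -/
def QdetDefined {I J : Type*} [Fintype I] [Fintype J] [DecidableEq I] [DecidableEq J]
    (A : Matrix I J R) (i : I) (j : J) : Prop :=
  HasTwoSidedInv (delSub A i j)

/- The quasideterminant `|A|_{ij} = a_{ij} - r_i^j (A^{ij})⁻¹ c_j^i` (junk value `0`
if `A^{ij}` is not invertible). -/
open Classical in
noncomputable def qdet {I J : Type*} [Fintype I] [Fintype J] [DecidableEq I] [DecidableEq J]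
    (A : Matrix I J R) (i : I) (j : J) : R :=
  if h : QdetDefined A i j then
    A i j - ∑ p : {p : I // p ≠ i}, ∑ q : {q : J // q ≠ j},
      A i q.val * (Exists.choose h) q p * A p.val j
  else 0

/-- A square matrix is generic if all of its square submatrices (including itself)
are invertible. -/
def Generic {n : ℕ} (A : Matrix (Fin n) (Fin n) R) : Prop :=
  ∀ S T : Finset (Fin n), S.card = T.card →
    HasTwoSidedInv (A.submatrix (Subtype.val : {p : Fin n // p ∈ S} → Fin n)
      (Subtype.val : {q : Fin n // q ∈ T} → Fin n))

open scoped Quaternion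

/-- `y_k(C) = |C^{1…k−1,1…k−1}|_{kk}`, the `(k,k)`-quasideterminant of the submatrix of `C`
on rows and columns `k, …, m`. -/
noncomputable def ykQdet {R : Type*} [Ring R] {m : ℕ} (C : Matrix (Fin m) (Fin m) R)
    (k : Fin m) : R :=
  qdet (C.submatrix (Subtype.val : {p : Fin m // k ≤ p} → Fin m)
    (Subtype.val : {q : Fin m // k ≤ q} → Fin m)) ⟨k, le_refl k⟩ ⟨k, le_refl k⟩

/-- The norm `ν(C) = Π_k ν(y_k(C)) ∈ ℝ` of a square quaternionic matrix. -/
noncomputable def nuMat {m : ℕ} (C : Matrix (Fin m) (Fin m) ℍ[ℝ]) : ℝ :=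
  ∏ k : Fin m, Quaternion.normSq (ykQdet C k)

/-- The norm of the square submatrix of `A` on rows `S` and columns `T` (each taken in
increasing order); junk value `0` if `S.card ≠ T.card`. -/
noncomputable def nuOfSub {n : ℕ} (A : Matrix (Fin n) (Fin n) ℍ[ℝ])
    (S T : Finset (Fin n)) : ℝ :=
  if h : S.card = T.card then
    nuMat (Matrix.of fun p q : Fin S.card =>
      A ((S.orderIsoOfFin rfl p : Fin n)) ((T.orderIsoOfFin h.symm q : Fin n)))
  else 0

/-- The monomial `m_{I,J}(B) = a_{i₁j₂} ā_{i₂j₂} a_{i₂j₃} ⋯ ā_{i_kj_k} a_{i_kj₁}`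
(`= a_{i₁j₁}` when `k = 1`) attached to orderings `LI = (i₁,…,i_k)`, `LJ = (j₁,…,j_k)`;
the entries are taken from the ambient matrix `A`. -/
noncomputable def listMono {n : ℕ} (A : Matrix (Fin n) (Fin n) ℍ[ℝ]) (i j : Fin n)
    (LI LJ : List (Fin n)) : ℍ[ℝ] :=
  (((List.range (LI.length - 1)).map (fun t =>
      A (LI.getD t i) (LJ.getD (t + 1) j) * star (A (LI.getD (t + 1) i) (LJ.getD (t + 1) j)))).prod)
    * A (LI.getD (LI.length - 1) i) (LJ.getD 0 j)

/-- The `(i,j)`-th double permanent `π_{ij}(B)` of the submatrix `B` of `A` on rows `S` and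
columns `T`: the sum of `m_{I,J}(B)` over all orderings `I` of `S` with `i₁ = i` and all
orderings `J` of `T` with `j₁ = j`. -/
noncomputable def dperm {n : ℕ} (A : Matrix (Fin n) (Fin n) ℍ[ℝ]) (i j : Fin n)
    (S T : Finset (Fin n)) : ℍ[ℝ] :=
  ((S.toList.permutations.filter (fun L => L.head? = some i)).map (fun LI =>
    ((T.toList.permutations.filter (fun L => L.head? = some j)).map (fun LJ =>
      listMono A i j LI LJ)).sum)).sum

theorem HasTwoSidedInv.conjTranspose {R : Type*} [Ring R] [StarRing R] {I J : Type*} [Fintype I]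
    [Fintype J] [DecidableEq I] [DecidableEq J] {M : Matrix I J R} (h : HasTwoSidedInv M) :
    HasTwoSidedInv Mᴴ := by
  obtain ⟨B, h1, h2⟩ := h
  exact ⟨Bᴴ, by rw [← conjTranspose_mul, h2, conjTranspose_one],
    by rw [← conjTranspose_mul, h1, conjTranspose_one]⟩

theorem delSub_conjTranspose {R : Type*} [Ring R] [StarRing R] {I J : Type*}
    (A : Matrix I J R) (i : I) (j : J) : delSub Aᴴ j i = (delSub A i j)ᴴ := rfl

/-- The quasideterminant may be computed with any two-sided inverse of `A^{ij}`, not only the one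
selected by choice in the definition. -/
theorem qdet_eq_of_inv {R : Type*} [Ring R] {I J : Type*} [Fintype I]
    [Fintype J] [DecidableEq I] [DecidableEq J] (A : Matrix I J R) (i : I) (j : J)
    (B : Matrix {q : J // q ≠ j} {p : I // p ≠ i} R)
    (h1 : delSub A i j * B = 1) (h2 : B * delSub A i j = 1) :
    qdet A i j = A i j - ∑ p : {p : I // p ≠ i}, ∑ q : {q : J // q ≠ j},
      A i q.val * B q p * A p.val j := by
  have h : QdetDefined A i j := ⟨B, h1, h2⟩
  have hB : Exists.choose h = B := by
    have hc := (Exists.choose_spec h).1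
    calc Exists.choose h = (B * delSub A i j) * Exists.choose h := by rw [h2, Matrix.one_mul]
      _ = B := by rw [Matrix.mul_assoc, hc, Matrix.mul_one]
  rw [qdet, dif_pos h, hB]

theorem qdet_conjTranspose {R : Type*} [Ring R] [StarRing R] {I J : Type*} [Fintype I]
    [Fintype J] [DecidableEq I] [DecidableEq J] (A : Matrix I J R) (i : I) (j : J) :
    qdet Aᴴ j i = star (qdet A i j) := by
  by_cases h : QdetDefined A i j
  · obtain ⟨B, h1, h2⟩ := h
    rw [qdet_eq_of_inv A i j B h1 h2, qdet_eq_of_inv Aᴴ j i Bᴴ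
      (by rw [delSub_conjTranspose, ← conjTranspose_mul, h2, conjTranspose_one])
      (by rw [delSub_conjTranspose, ← conjTranspose_mul, h1, conjTranspose_one])]
    rw [Finset.sum_comm]
    simp [star_sum, mul_assoc]
  · -- Neither quasideterminant is defined, so both sides are the junk value `0`.
    have h' : ¬ QdetDefined Aᴴ j i := fun hh => h (by
      simpa [QdetDefined, delSub_conjTranspose] using HasTwoSidedInv.conjTranspose hh)
    rw [qdet, dif_neg h', qdet, dif_neg h, star_zero]

theorem nuMat_conjTranspose {m : ℕ} (C : Matrix (Fin m) (Fin m) ℍ[ℝ]) :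
    nuMat Cᴴ = nuMat C := by
  unfold nuMat
  refine Finset.prod_congr rfl fun k _ => ?_
  rw [ykQdet, ← conjTranspose_submatrix, qdet_conjTranspose, Quaternion.normSq_star, ykQdet]

/-- `nuOfSub` with the common cardinality of `S` and `T` replaced by any `m` equal to it, so that
`S` and `T` play symmetric roles. -/
theorem nuOfSub_eq {n m : ℕ} (A : Matrix (Fin n) (Fin n) ℍ[ℝ]) (S T : Finset (Fin n))
    (hS : S.card = m) (hT : T.card = m) :
    nuOfSub A S T = nuMat (Matrix.of fun p q : Fin m =>
      A (S.orderIsoOfFin hS p : Fin n) (T.orderIsoOfFin hT q : Fin n)) := by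
  subst hS
  rw [nuOfSub, dif_pos hT.symm]

theorem nuOfSub_swap {n : ℕ} (A : Matrix (Fin n) (Fin n) ℍ[ℝ]) (hherm : A.IsHermitian)
    (S T : Finset (Fin n)) (h : S.card = T.card) : nuOfSub A S T = nuOfSub A T S := by
  rw [nuOfSub_eq A S T h rfl, nuOfSub_eq A T S rfl h, ← nuMat_conjTranspose]
  congr 1
  ext1 a b
  exact hherm.apply _ _

/-- For a generic Hermitian quaternionic matrix `A`, `conj(Q_{pq}(A)) = Q_{qp}(A)`, where
`Q_{pq}(A) = |A|_{pq} ν(A^{pq})`. -/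
theorem conj_Q_eq_Q_swap {n : ℕ}
    (A : Matrix (Fin n) (Fin n) ℍ[ℝ]) (hA : Generic A) (hherm : A.IsHermitian)
    (p q : Fin n) :
    star (qdet A p q * (↑(nuOfSub A (Finset.univ.erase p) (Finset.univ.erase q)) : ℍ[ℝ])) =
      qdet A q p * (↑(nuOfSub A (Finset.univ.erase q) (Finset.univ.erase p)) : ℍ[ℝ]) := by
  have hq : qdet A q p = star (qdet A p q) := by
    rw [← qdet_conjTranspose, hherm.eq]
  rw [nuOfSub_swap A hherm (Finset.univ.erase q) (Finset.univ.erase p) (by simp), hq, star_mul,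
    Quaternion.star_coe, Quaternion.coe_commutes]
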